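/- arXiv:2505.09270 — 4 statements merged into one kernel-verified Lean document; each statement's English description precedes it below -/
import Mathlib

section
/- Let n ≥ 1, let V : ℝⁿ → ℝ be continuously differentiable, and let f : ℝⁿ → ℂ be continuously differentiable. Set u(x,v) = f(x)·exp(−|v|²/4). If for all (x,v) ∈ ℝⁿ × ℝⁿ one has v·∇_x u(x,v) − ∇V(x)·∇_v u(x,v) = 0, then there exists a constant c ∈ ℂ such that f(x) = c·exp(−V(x)/2) for all x ∈ ℝⁿ. -/
/-- If `u(x,v) = f(x)·exp(−|v|²/4)` is annihilated by the transport part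
`v·∇_x − ∇V(x)·∇_v` of the Kramers–Fokker–Planck operator, then
`f(x) = c·exp(−V(x)/2)` for some constant `c ∈ ℂ`. -/
theorem stmt_5 (n : ℕ) (hn : 1 ≤ n) (V : (Fin n → ℝ) → ℝ) (hV : ContDiff ℝ 1 V)
    (f : (Fin n → ℝ) → ℂ) (hf : ContDiff ℝ 1 f)
    (u : (Fin n → ℝ) → (Fin n → ℝ) → ℂ)
    (hu : ∀ x v : Fin n → ℝ, u x v = f x * Complex.exp (-((∑ j, (v j) ^ 2 : ℝ) : ℂ) / 4))
    (heq : ∀ x v : Fin n → ℝ,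
      (∑ j, ((v j : ℝ) : ℂ) * fderiv ℝ (fun y => u y v) x (Pi.single j 1))
        - (∑ j, ((fderiv ℝ V x (Pi.single j 1) : ℝ) : ℂ) *
            fderiv ℝ (u x) v (Pi.single j 1)) = 0) :
    ∃ c : ℂ, ∀ x : Fin n → ℝ, f x = c * Complex.exp (-(V x : ℂ) / 2) := by
  have hfd : Differentiable ℝ f := hf.differentiable (by norm_num)
  have hVd : Differentiable ℝ V := hV.differentiable (by norm_num)
  have key : ∀ x v : Fin n → ℝ,
      fderiv ℝ f x v + f x * ((fderiv ℝ V x v : ℝ) : ℂ) / 2 = 0 := by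
    intro x v
    have h := heq x v
    have h1 : fderiv ℝ (fun y => u y v) x =
        Complex.exp (-((∑ j, (v j) ^ 2 : ℝ) : ℂ) / 4) • fderiv ℝ f x := by
      have : (fun y => u y v) =
          fun y => f y * Complex.exp (-((∑ j, (v j) ^ 2 : ℝ) : ℂ) / 4) := by
        funext y; exact hu y v
      rw [this]
      exact ((hfd x).hasFDerivAt.mul_const _).fderiv
    have h2 : ∀ j, fderiv ℝ (u x) v (Pi.single j 1) =
        f x * (Complex.exp (-((∑ j, (v j) ^ 2 : ℝ) : ℂ) / 4) * (-((v j : ℝ) : ℂ) / 2)) := by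
      intro j
      have e : u x = fun w => f x * Complex.exp (-((∑ j, (w j) ^ 2 : ℝ) : ℂ) / 4) := by
        funext w; exact hu x w
      have hd : DifferentiableAt ℝ (u x) v := by
        rw [e]; push_cast
        have : ∀ i : Fin n, DifferentiableAt ℝ (fun w : Fin n → ℝ => ((w i : ℝ) : ℂ)) v :=
          fun i => (Complex.ofRealCLM.comp
            (ContinuousLinearMap.proj (R := ℝ) (φ := fun _ : Fin n => ℝ) i)).differentiableAt
        fun_prop
      have hl : HasDerivAt (fun t : ℝ => v + t • (Pi.single j 1 : Fin n → ℝ))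
          (Pi.single j 1) 0 := by
        simpa using ((hasDerivAt_id (0:ℝ)).smul_const (Pi.single j 1 : Fin n → ℝ)).const_add v
      have hc : HasDerivAt (fun t : ℝ => u x (v + t • (Pi.single j 1 : Fin n → ℝ)))
          (fderiv ℝ (u x) v (Pi.single j 1)) 0 := by
        refine HasFDerivAt.comp_hasDerivAt (0:ℝ) (f := fun t : ℝ => v + t • (Pi.single j 1 : Fin n → ℝ)) ?_ hl
        simpa using hd.hasFDerivAt
      have hq : HasDerivAt (fun t : ℝ => ∑ i, ((v + t • (Pi.single j 1 : Fin n → ℝ)) i) ^ 2)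
          (2 * v j) 0 := by
        have : ∀ i ∈ (Finset.univ : Finset (Fin n)),
            HasDerivAt (fun t : ℝ => ((v + t • (Pi.single j 1 : Fin n → ℝ)) i) ^ 2)
              (2 * v i * (Pi.single j 1 : Fin n → ℝ) i) 0 := by
          intro i _
          simpa using ((hasDerivAt_pi.1 hl) i).fun_pow 2
        have h3 := HasDerivAt.fun_sum this
        simpa [Pi.single_apply] using h3
      have h4 := ((((hq.ofReal_comp).neg.div_const 4).cexp).const_mul (f x))
      rw [e] at hc
      rw [e, hc.unique h4]
      simp
      ring_nf
      simp
    have hs : ∀ w : Fin n → ℝ, w = ∑ j, w j • (Pi.single j 1 : Fin n → ℝ) := by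
      intro w
      exact pi_eq_sum_univ' w
    have h5 : fderiv ℝ f x v = ∑ j, ((v j : ℝ) : ℂ) * fderiv ℝ f x (Pi.single j 1) := by
      conv_lhs => rw [hs v]
      simp
    have h6 : fderiv ℝ V x v = ∑ j, v j * fderiv ℝ V x (Pi.single j 1) := by
      conv_lhs => rw [hs v]
      simp
    simp only [h1, h2] at h
    have hE := Complex.exp_ne_zero (-((∑ j, (v j) ^ 2 : ℝ) : ℂ) / 4)
    generalize Complex.exp (-((∑ j, (v j) ^ 2 : ℝ) : ℂ) / 4) = E at h hE
    apply mul_left_cancel₀ hE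
    rw [mul_zero, ← h, h5, h6, mul_add, sub_eq_add_neg]
    push_cast
    rw [Finset.mul_sum, Finset.mul_sum, Finset.sum_div, Finset.mul_sum, ← Finset.sum_neg_distrib]
    congr 1
    · refine Finset.sum_congr rfl fun j _ => ?_
      simp; ring
    · refine Finset.sum_congr rfl fun j _ => ?_
      ring
  have hg : ∀ x, HasFDerivAt (fun y => f y * Complex.exp ((V y : ℂ) / 2)) (0 : (Fin n → ℝ) →L[ℝ] ℂ) x := by
    intro x
    have hVc : HasFDerivAt (fun y => ((V y : ℝ) : ℂ) * (1/2)) _ x :=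
      (Complex.ofRealCLM.hasFDerivAt.comp x (hVd x).hasFDerivAt).mul_const (1/2 : ℂ)
    have := (hfd x).hasFDerivAt.mul hVc.cexp
    simp only [div_eq_mul_inv]
    simp only [one_div] at this
    refine this.congr_fderiv ?_
    ext v
    have k := key x v
    simp
    linear_combination (Complex.exp ((V x : ℂ) * 2⁻¹)) * k
  have hcst : ∀ x, f x * Complex.exp ((V x : ℂ) / 2) = f 0 * Complex.exp ((V 0 : ℂ) / 2) := fun x =>
    is_const_of_fderiv_eq_zero (𝕜 := ℝ) (fun y => (hg y).differentiableAt)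
      (fun y => (hg y).fderiv) x 0
  refine ⟨f 0 * Complex.exp ((V 0 : ℂ) / 2), fun x => ?_⟩
  rw [← hcst x, mul_assoc, ← Complex.exp_add]
  ring_nf
  simp
end

section
/- Let j ∈ ℕ and define the entire function f(z) = exp(−z²/4)·F_j(z), where F_j is the probabilists' Hermite polynomial. Then for every z ∈ ℂ, −f''(z) + (z²/4)·f(z) = (j + 1/2)·f(z), where f'' denotes the second complex derivative of f. -/
open Polynomial in
theorem hermite_ode (n : ℕ) : derivative (derivative (hermite n)) =
    X * derivative (hermite n) - (n : ℤ[X]) * hermite n := by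
  induction n with
  | zero => simp
  | succ n ih =>
    have h1 : derivative (hermite (n+1)) = ((n : ℤ[X]) + 1) * hermite n := by
      rw [hermite_succ, derivative_sub, derivative_mul, ih, derivative_X]
      ring
    have h2 : derivative (((n : ℤ[X]) + 1) * hermite n)
        = ((n : ℤ[X]) + 1) * derivative (hermite n) := by
      simp [derivative_mul]
    rw [h1, h2, hermite_succ]
    push_cast
    ring

theorem exp_poly_deriv (p : Polynomial ℤ) (z : ℂ) :
    HasDerivAt (fun z : ℂ => Complex.exp (-z ^ 2 / 4) * Polynomial.aeval z p)
      (Complex.exp (-z ^ 2 / 4) * (Polynomial.aeval z (Polynomial.derivative p)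
        - z / 2 * Polynomial.aeval z p)) z := by
  have h1 : HasDerivAt (fun z : ℂ => -z ^ 2 / 4) (-z / 2) z := by
    have := ((hasDerivAt_pow 2 z).neg).div_const 4
    refine this.congr_deriv ?_
    push_cast
    ring
  refine (h1.cexp.mul (p.hasDerivAt_aeval z)).congr_deriv ?_
  ring

/-- The entire Hermite function `f(z) = exp(−z²/4)·F_j(z)` (with `F_j` the probabilists'
Hermite polynomial) satisfies `−f'' + (z²/4)f = (j + 1/2)f` on all of `ℂ`. -/
theorem stmt_7 (j : ℕ) (f : ℂ → ℂ)
    (hf : ∀ z : ℂ, f z = Complex.exp (-z ^ 2 / 4) * Polynomial.aeval z (Polynomial.hermite j)) :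
    ∀ z : ℂ, -(deriv (deriv f) z) + (z ^ 2 / 4) * f z = ((j : ℂ) + 1/2) * f z := by
  intro z
  obtain rfl : f = _ := funext hf
  have hd : deriv (fun z : ℂ => Complex.exp (-z ^ 2 / 4) *
      Polynomial.aeval z (Polynomial.hermite j)) = fun z : ℂ =>
      Complex.exp (-z ^ 2 / 4) * Polynomial.aeval z (Polynomial.derivative (Polynomial.hermite j))
      - z / 2 * (Complex.exp (-z ^ 2 / 4) * Polynomial.aeval z (Polynomial.hermite j)) := by
    funext w
    rw [(exp_poly_deriv _ w).deriv]
    ring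
  have h2 := (exp_poly_deriv (Polynomial.derivative (Polynomial.hermite j)) z).sub
    (((hasDerivAt_id z).div_const 2).mul (exp_poly_deriv (Polynomial.hermite j) z))
  have h3 := h2.deriv
  rw [hd]
  have h4 := congrArg (Polynomial.aeval z) (hermite_ode j)
  simp only [map_sub, map_mul, Polynomial.aeval_X, map_natCast] at h4
  rw [h4] at h3
  erw [h3]
  simp only [id]
  ring
end

section
/- Let j, k ∈ ℕ and τ ∈ ℝ. Then ∫_ℝ φ_j(s + 2iτ)·φ_k(s + 2iτ) ds = δ_{jk} (Kronecker delta). That is, the complex-shifted normalized Hermite functions satisfy the same bilinear orthonormality relations as on the real line. -/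
/-- The normalized Hermite function `φ_j(z) = (j!·√(2π))^(−1/2)·exp(−z²/4)·F_j(z)`,
extended to an entire function on `ℂ`. -/
noncomputable def hermiteFun (j : ℕ) (z : ℂ) : ℂ :=
  ((((j.factorial : ℝ) * Real.sqrt (2 * Real.pi)) ^ (-(1 : ℝ) / 2) : ℝ) : ℂ) *
    Complex.exp (-z ^ 2 / 4) * Polynomial.aeval z (Polynomial.hermite j)

open MeasureTheory Polynomial in
lemma aux_int (c : ℂ) (p : ℤ[X]) :
    Integrable (fun s : ℝ => Complex.exp (-((s : ℂ) + c) ^ 2 / 2) * aeval ((s : ℂ) + c) p) := by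
  induction p using Polynomial.induction_on' with
  | add p q hp hq =>
    refine (hp.add hq).congr (Filter.Eventually.of_forall fun s => ?_)
    simp [mul_add]
  | monomial n a =>
    have h1 := integrable_cexp_quadratic' (b := -1/2) (by norm_num) (-c + 1) (-c^2/2)
    have h2 := integrable_cexp_quadratic' (b := -1/2) (by norm_num) (-c - 1) (-c^2/2)
    refine ((h1.norm.add h2.norm).const_mul (‖(a : ℂ)‖ * (n.factorial * Real.exp ‖c‖))).mono'
      (by apply Continuous.aestronglyMeasurable; simp only [aeval_monomial]; fun_prop)
      (Filter.Eventually.of_forall fun s => ?_)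
    have e1 : Complex.exp (-1/2 * (s:ℂ)^2 + (-c+1) * s + -c^2/2)
        = Complex.exp (-((s : ℂ) + c) ^ 2 / 2) * Complex.exp (s : ℂ) := by
      rw [← Complex.exp_add]; congr 1; ring
    have e2 : Complex.exp (-1/2 * (s:ℂ)^2 + (-c-1) * s + -c^2/2)
        = Complex.exp (-((s : ℂ) + c) ^ 2 / 2) * Complex.exp (-s : ℂ) := by
      rw [← Complex.exp_add]; congr 1; ring
    have n2 : ‖Complex.exp (-s : ℂ)‖ = Real.exp (-s) := by simp [Complex.norm_exp]
    have n1 : ‖Complex.exp (s : ℂ)‖ = Real.exp s := by simp [Complex.norm_exp]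
    simp only [Pi.add_apply, e1, e2, norm_mul, n1, n2, aeval_monomial, norm_pow]
    have hz : ‖(s:ℂ) + c‖ ≤ |s| + ‖c‖ := by
      simpa using norm_add_le (s:ℂ) c
    have hp := Real.pow_div_factorial_le_exp ‖(s:ℂ) + c‖ (norm_nonneg _) n
    rw [div_le_iff₀ (by positivity)] at hp
    have hs : Real.exp |s| ≤ Real.exp s + Real.exp (-s) := Real.exp_abs_le s
    have h3 : Real.exp ‖(s:ℂ) + c‖ ≤ (Real.exp s + Real.exp (-s)) * Real.exp ‖c‖ := by
      refine (Real.exp_le_exp.2 hz).trans ?_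
      rw [Real.exp_add]
      gcongr
    have h4 : ‖(s:ℂ) + c‖ ^ n ≤ (Real.exp s + Real.exp (-s)) * Real.exp ‖c‖ * n.factorial :=
      hp.trans (by gcongr)
    have h5 : ‖(algebraMap ℤ ℂ) a‖ = ‖(a:ℂ)‖ := by simp
    rw [h5]
    calc _ ≤ ‖Complex.exp (-((s : ℂ) + c) ^ 2 / 2)‖ * (‖(a:ℂ)‖ *
          ((Real.exp s + Real.exp (-s)) * Real.exp ‖c‖ * n.factorial)) := by gcongr
      _ = _ := by ring

open MeasureTheory Polynomial in
lemma aux_step (c : ℂ) (j : ℕ) (q : ℤ[X]) :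
    ∫ s : ℝ, Complex.exp (-((s : ℂ) + c) ^ 2 / 2) * aeval ((s : ℂ) + c) (hermite (j+1) * q) =
    ∫ s : ℝ, Complex.exp (-((s : ℂ) + c) ^ 2 / 2) *
      aeval ((s : ℂ) + c) (hermite j * derivative q) := by
  have key := integral_eq_zero_of_hasDerivAt_of_integrable
    (f := fun s : ℝ => Complex.exp (-((s : ℂ) + c) ^ 2 / 2) * aeval ((s : ℂ) + c) (hermite j * q))
    (f' := fun s : ℝ => Complex.exp (-((s : ℂ) + c) ^ 2 / 2) *
        aeval ((s : ℂ) + c) (hermite j * derivative q) -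
      Complex.exp (-((s : ℂ) + c) ^ 2 / 2) * aeval ((s : ℂ) + c) (hermite (j+1) * q))
    (fun s => ?_) ((aux_int c _).sub (aux_int c _)) (aux_int c _)
  · rw [integral_sub (aux_int c _) (aux_int c _)] at key
    exact (sub_eq_zero.1 key).symm
  · have h0 : HasDerivAt (fun z : ℂ => z + c) 1 (s : ℂ) := (hasDerivAt_id _).add_const c
    have h1 : HasDerivAt (fun z : ℂ => Complex.exp (-(z + c) ^ 2 / 2)) _ (s : ℂ) :=
      (((h0.pow 2).neg).div_const 2).cexp
    have h2 : HasDerivAt (fun z : ℂ => aeval (z + c) (hermite j * q)) _ (s : ℂ) :=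
      HasDerivAt.comp (h₂ := fun z => aeval z (hermite j * q)) (s:ℂ) ((hermite j * q).hasDerivAt_aeval ((s:ℂ) + c)) h0
    refine (h1.mul h2).comp_ofReal.congr_deriv ?_
    simp [hermite_succ]
    ring

open MeasureTheory Polynomial in
lemma aux_iter (c : ℂ) (j : ℕ) (q : ℤ[X]) :
    ∫ s : ℝ, Complex.exp (-((s : ℂ) + c) ^ 2 / 2) * aeval ((s : ℂ) + c) (hermite j * q) =
    ∫ s : ℝ, Complex.exp (-((s : ℂ) + c) ^ 2 / 2) * aeval ((s : ℂ) + c) (derivative^[j] q) := by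
  induction j generalizing q with
  | zero => simp
  | succ j ih => rw [aux_step, ih, Function.iterate_succ_apply]

open MeasureTheory Polynomial in
lemma aux_one (c : ℂ) :
    ∫ s : ℝ, Complex.exp (-((s : ℂ) + c) ^ 2 / 2) = (Real.sqrt (2 * Real.pi) : ℝ) := by
  have h := integral_cexp_quadratic (b := -1/2) (by norm_num) (-c) (-c^2/2)
  have e : ∀ s : ℝ, Complex.exp (-1/2 * (s:ℂ)^2 + (-c) * s + -c^2/2)
        = Complex.exp (-((s : ℂ) + c) ^ 2 / 2) := fun s => by congr 1; ring
  simp only [e] at h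
  rw [h, Real.sqrt_eq_rpow, Complex.ofReal_cpow (by positivity)]
  have : -c ^ 2 / 2 - (-c) ^ 2 / (4 * (-1 / 2)) = 0 := by ring
  rw [this, Complex.exp_zero, mul_one]
  congr 1
  · push_cast; ring
  · push_cast; ring

open MeasureTheory Polynomial in
lemma aux_orth (c : ℂ) (j k : ℕ) :
    ∫ s : ℝ, Complex.exp (-((s : ℂ) + c) ^ 2 / 2) * aeval ((s : ℂ) + c) (hermite j * hermite k) =
    if j = k then ((j.factorial * Real.sqrt (2 * Real.pi) : ℝ) : ℂ) else 0 := by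
  wlog hjk : k ≤ j generalizing j k
  · have := this k j (by omega)
    rw [mul_comm, this, if_neg (by omega), if_neg (by omega)]
  rw [aux_iter]
  rcases hjk.eq_or_lt with rfl | h
  · have : derivative^[k] (hermite k) = C (k.factorial : ℤ) := by
      rw [eq_C_of_natDegree_eq_zero (p := derivative^[k] (hermite k))]
      · rw [coeff_iterate_derivative]
        simp [Nat.descFactorial_self]
      · have := natDegree_iterate_derivative (hermite k) k
        simp only [natDegree_hermite] at this
        omega
    simp only [this, aeval_C]
    rw [integral_mul_const, aux_one]
    simp [mul_comm]
  · rw [iterate_derivative_eq_zero (by simpa using h), if_neg (by omega)]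
    simp

/-- Bilinear orthonormality of the complex-shifted normalized Hermite functions:
`∫_ℝ φ_j(s + 2iτ)·φ_k(s + 2iτ) ds = δ_{jk}`. -/
theorem stmt_9 (j k : ℕ) (τ : ℝ) :
    ∫ s : ℝ, hermiteFun j ((s : ℂ) + 2 * Complex.I * (τ : ℂ)) *
        hermiteFun k ((s : ℂ) + 2 * Complex.I * (τ : ℂ)) =
      if j = k then 1 else 0 := by
  have hpos : ∀ n : ℕ, 0 < (n.factorial : ℝ) * Real.sqrt (2 * Real.pi) := fun n => by positivity
  have e : ∀ s : ℝ, hermiteFun j ((s : ℂ) + 2 * Complex.I * (τ : ℂ)) *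
        hermiteFun k ((s : ℂ) + 2 * Complex.I * (τ : ℂ)) =
      (((((j.factorial : ℝ) * Real.sqrt (2 * Real.pi)) ^ (-(1 : ℝ) / 2) : ℝ) : ℂ) *
      ((((k.factorial : ℝ) * Real.sqrt (2 * Real.pi)) ^ (-(1 : ℝ) / 2) : ℝ) : ℂ)) *
      (Complex.exp (-((s : ℂ) + 2 * Complex.I * (τ : ℂ)) ^ 2 / 2) *
        Polynomial.aeval ((s : ℂ) + 2 * Complex.I * (τ : ℂ))
          (Polynomial.hermite j * Polynomial.hermite k)) := by
    intro s
    have : Complex.exp (-((s : ℂ) + 2 * Complex.I * (τ : ℂ)) ^ 2 / 2) =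
        Complex.exp (-((s : ℂ) + 2 * Complex.I * (τ : ℂ)) ^ 2 / 4) *
        Complex.exp (-((s : ℂ) + 2 * Complex.I * (τ : ℂ)) ^ 2 / 4) := by
      rw [← Complex.exp_add]; congr 1; ring
    rw [this, map_mul]
    unfold hermiteFun
    ring
  simp only [e]
  rw [MeasureTheory.integral_const_mul, aux_orth]
  split_ifs with h
  · subst h
    rw [← Complex.ofReal_mul, ← Complex.ofReal_mul, ← Real.rpow_add (hpos j)]
    have : (-(1:ℝ)/2 + -1/2) = -1 := by norm_num
    rw [this, Real.rpow_neg_one, inv_mul_cancel₀ (hpos j).ne', Complex.ofReal_one]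
  · simp
end

section
/- Let n ≥ 1 and let V : ℝⁿ → ℝ be continuously differentiable, bounded, and such that |∇V(x)| ≤ C(1 + |x|)^m for some constants C > 0 and m ∈ ℕ. If u : ℝⁿ × ℝⁿ → ℂ is a Schwartz function satisfying, for all (x,v) ∈ ℝⁿ × ℝⁿ, −Δ_v u(x,v) + (|v|²/4 − n/2)·u(x,v) + v·∇_x u(x,v) − ∇V(x)·∇_v u(x,v) = 0, then u = 0. That is, the Kramers–Fokker–Planck operator with a bounded potential has no nonzero stationary Schwartz solutions. -/
open MeasureTheory SchwartzMap LineDeriv in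
lemma kfp_int {E : Type*} [NormedAddCommGroup E] [NormedSpace ℝ E] [FiniteDimensional ℝ E]
    [MeasurableSpace E] [BorelSpace E] (μ : Measure E) [μ.IsAddHaarMeasure]
    (h : E → ℝ) (hc : Continuous h) (C : ℝ) (m : ℕ) (hb : ∀ p, |h p| ≤ C * (1 + ‖p‖) ^ m)
    (a b : SchwartzMap E ℂ) : Integrable (fun p => h p * inner ℝ (a p) (b p)) μ := by
  obtain ⟨A, hA⟩ : ∃ A, ∀ p, ‖a p‖ ≤ A := by
    obtain ⟨A, -, hA⟩ := a.decay 0 0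
    exact ⟨A, fun p => by simpa using hA p⟩
  have hC : 0 ≤ C := by
    have := (abs_nonneg _).trans (hb 0)
    simpa using this
  have hA0 : 0 ≤ A := (norm_nonneg _).trans (hA 0)
  have i1 := ((b.integrable_pow_mul μ 0).add (b.integrable_pow_mul μ m)).const_mul
    (C * 2 ^ (m-1) * A)
  refine i1.mono' ?_ ?_
  · exact (hc.mul (a.continuous.inner b.continuous)).aestronglyMeasurable
  · refine Filter.Eventually.of_forall fun p => ?_
    have h1 : (1 + ‖p‖) ^ m ≤ 2 ^ (m-1) * (1 ^ m + ‖p‖ ^ m) :=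
      add_pow_le zero_le_one (norm_nonneg _) m
    have h2 : ‖inner ℝ (a p) (b p)‖ ≤ A * ‖b p‖ :=
      (norm_inner_le_norm _ _).trans (by gcongr; exact hA p)
    calc ‖h p * inner ℝ (a p) (b p)‖ = |h p| * ‖inner ℝ (a p) (b p)‖ := by
          rw [norm_mul, Real.norm_eq_abs]
      _ ≤ (C * (2 ^ (m-1) * (1 ^ m + ‖p‖ ^ m))) * (A * ‖b p‖) := by
          gcongr
          exact (hb p).trans (by gcongr)
      _ = _ := by simp; ring

open MeasureTheory in
lemma kfp_zero {E : Type*} [NormedAddCommGroup E] [NormedSpace ℝ E] [FiniteDimensional ℝ E]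
    [MeasurableSpace E] [BorelSpace E] (μ : Measure E) [μ.IsAddHaarMeasure]
    (g g' : E → ℝ) (w : E) (hg : Integrable g μ) (hg' : Integrable g' μ)
    (hd : ∀ x, HasLineDerivAt ℝ g (g' x) x w) : ∫ x, g' x ∂μ = 0 := by
  have := integral_bilinear_hasLineDerivAt_right_eq_neg_left_of_integrable (μ := μ)
    (f := fun _ : E => (1:ℝ)) (f' := fun _ => (0:ℝ)) (g := g) (g' := g') (v := w)
    (B := ContinuousLinearMap.mul ℝ ℝ) (by simp) (by simpa using hg') (by simpa using hg)
    (fun x _ => by simpa [HasLineDerivAt] using hasDerivAt_const (0:ℝ) (1:ℝ)) (fun x _ => hd x)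
  simpa using this

lemma kfp_line {E : Type*} [NormedAddCommGroup E] [NormedSpace ℝ E] (u : SchwartzMap E ℂ)
    (x w : E) : HasDerivAt (fun t : ℝ => u (x + t • w)) (fderiv ℝ u x w) 0 :=
  (u.differentiableAt (x := x)).hasFDerivAt.hasLineDerivAt w

lemma kfp_pt {n : ℕ} (y W : Fin n → ℝ) (a : ℂ) (b c d : Fin n → ℂ)
    (h : -(∑ j, c j) + (((∑ j, (y j) ^ 2 : ℝ) : ℂ) / 4 - (n : ℂ) / 2) * a
        + (∑ j, ((y j : ℝ) : ℂ) * d j) - (∑ j, ((W j : ℝ) : ℂ) * b j) = 0) :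
    ∑ j, ‖b j + ((y j / 2 : ℝ) : ℂ) * a‖ ^ 2 =
    ∑ j, ((1 * inner ℝ (b j) (b j) + 1 * inner ℝ a (c j) + (1/2) * inner ℝ a a
      + y j * inner ℝ a (b j)) - y j * inner ℝ a (d j) + W j * inner ℝ a (b j)) := by
  have h2 : ∑ j, (-c j + (((y j) ^ 2 : ℝ) / 4 - 1 / 2 : ℂ) * a + ((y j : ℝ) : ℂ) * d j
      - ((W j : ℝ) : ℂ) * b j) = 0 := by
    rw [← h]
    simp only [Finset.sum_add_distrib, Finset.sum_sub_distrib, Finset.sum_neg_distrib,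
      ← Finset.sum_mul, ← Finset.sum_div]
    simp
  have h3 : ∑ j, inner ℝ a (-c j + (((y j) ^ 2 : ℝ) / 4 - 1 / 2 : ℂ) * a + ((y j : ℝ) : ℂ) * d j
      - ((W j : ℝ) : ℂ) * b j) = 0 := by
    rw [← inner_sum, h2, inner_zero_right]
  rw [← sub_eq_zero, ← Finset.sum_sub_distrib, ← h3]
  refine Finset.sum_congr rfl fun j _ => ?_
  have e : (((y j) ^ 2 : ℝ) / 4 - 1 / 2 : ℂ) = (((y j)^2/4 - 1/2 : ℝ) : ℂ) := by push_cast; ring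
  rw [e, ← Complex.normSq_eq_norm_sq]
  simp only [Complex.inner, Complex.normSq_apply, Complex.add_re, Complex.add_im, Complex.mul_re,
    Complex.mul_im, Complex.sub_re, Complex.sub_im, Complex.neg_re, Complex.neg_im,
    Complex.ofReal_re, Complex.ofReal_im, Complex.conj_re, Complex.conj_im]
  ring

lemma kfp_const {f f' : ℝ → ℂ} (h : ∀ t, HasDerivAt f (f' t) t) (h0 : ∀ t, f' t = 0)
    (s t : ℝ) : f s = f t :=
  is_const_of_deriv_eq_zero (fun t => (h t).differentiableAt)
    (fun t => by rw [(h t).deriv, h0]) s t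

open MeasureTheory SchwartzMap LineDeriv in


/-- The Kramers–Fokker–Planck operator with a bounded `C¹` potential whose gradient has
polynomial growth has no nonzero stationary Schwartz solutions: if `u` is a Schwartz
function on `ℝⁿ × ℝⁿ` with
`−Δ_v u + (|v|²/4 − n/2)u + v·∇_x u − ∇V(x)·∇_v u = 0`, then `u = 0`. -/
theorem stmt_16 (n : ℕ) (hn : 1 ≤ n) (V : (Fin n → ℝ) → ℝ) (hV : ContDiff ℝ 1 V)
    (hVb : ∃ C : ℝ, ∀ x, |V x| ≤ C)
    (hVgrad : ∃ C > (0 : ℝ), ∃ m : ℕ, ∀ x, ‖fderiv ℝ V x‖ ≤ C * (1 + ‖x‖) ^ m)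
    (u : SchwartzMap ((Fin n → ℝ) × (Fin n → ℝ)) ℂ)
    (hu : ∀ p : (Fin n → ℝ) × (Fin n → ℝ),
      -(∑ j, fderiv ℝ (fun q => fderiv ℝ (⇑u) q (0, Pi.single j 1)) p (0, Pi.single j 1))
        + (((∑ j, (p.2 j) ^ 2 : ℝ) : ℂ) / 4 - (n : ℂ) / 2) * u p
        + (∑ j, ((p.2 j : ℝ) : ℂ) * fderiv ℝ (⇑u) p (Pi.single j 1, 0))
        - (∑ j, ((fderiv ℝ V p.1 (Pi.single j 1) : ℝ) : ℂ) *
            fderiv ℝ (⇑u) p (0, Pi.single j 1)) = 0) :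
    u = 0 := by
  obtain ⟨C, hC⟩ := hVb
  obtain ⟨K, hK, m, hG⟩ := hVgrad
  let e : Fin n → (Fin n → ℝ) × (Fin n → ℝ) := fun j => (0, Pi.single j 1)
  let f : Fin n → (Fin n → ℝ) × (Fin n → ℝ) := fun j => (Pi.single j 1, 0)
  let W : Fin n → (Fin n → ℝ) × (Fin n → ℝ) → ℝ := fun j p => fderiv ℝ V p.1 (Pi.single j 1)
  let b : Fin n → SchwartzMap ((Fin n → ℝ) × (Fin n → ℝ)) ℂ := fun j => ∂_{e j} u
  let c : Fin n → SchwartzMap ((Fin n → ℝ) × (Fin n → ℝ)) ℂ := fun j => ∂_{e j} (b j)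
  let d : Fin n → SchwartzMap ((Fin n → ℝ) × (Fin n → ℝ)) ℂ := fun j => ∂_{f j} u
  have hu' : ∀ p, -(∑ j, c j p) + (((∑ j, (p.2 j) ^ 2 : ℝ) : ℂ) / 4 - (n : ℂ) / 2) * u p
        + (∑ j, ((p.2 j : ℝ) : ℂ) * d j p) - (∑ j, ((W j p : ℝ) : ℂ) * b j p) = 0 := hu
  have lu : ∀ j p, HasDerivAt (fun t : ℝ => u (p + t • e j)) (b j p) 0 :=
    fun j p => kfp_line u p (e j)
  have lb : ∀ j p, HasDerivAt (fun t : ℝ => b j (p + t • e j)) (c j p) 0 :=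
    fun j p => kfp_line (b j) p (e j)
  have lx : ∀ j p, HasDerivAt (fun t : ℝ => u (p + t • f j)) (d j p) 0 :=
    fun j p => kfp_line u p (f j)
  have ly : ∀ j (p : (Fin n → ℝ) × (Fin n → ℝ)),
      HasDerivAt (fun t : ℝ => (p + t • e j).2 j) 1 0 := by
    intro j p
    simpa [e] using (hasDerivAt_id (0:ℝ)).const_add (p.2 j)
  have yc : ∀ j, Continuous (fun p : (Fin n → ℝ) × (Fin n → ℝ) => p.2 j) := fun j => by fun_prop
  have yb : ∀ j (p : (Fin n → ℝ) × (Fin n → ℝ)), |p.2 j| ≤ 1 * (1 + ‖p‖) ^ 1 := by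
    intro j p
    have h1 : |p.2 j| ≤ ‖p.2‖ := norm_le_pi_norm p.2 j
    have h2 := norm_snd_le p
    linarith
  have Wc : ∀ j, Continuous (W j) := by
    intro j
    have := hV.continuous_fderiv (by norm_num)
    exact (this.comp continuous_fst).clm_apply continuous_const
  have Wb : ∀ j p, |W j p| ≤ K * (1 + ‖p‖) ^ m := by
    intro j p
    have h1 : ‖W j p‖ ≤ ‖fderiv ℝ V p.1‖ * ‖(Pi.single j 1 : Fin n → ℝ)‖ :=
      ContinuousLinearMap.le_opNorm _ _
    have h2 : ‖(Pi.single j 1 : Fin n → ℝ)‖ = 1 := by simp [Pi.norm_single]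
    rw [h2, mul_one] at h1
    refine h1.trans ((hG p.1).trans ?_)
    gcongr
    exact norm_fst_le p
  have cb : ∀ (r : ℝ) (p : (Fin n → ℝ) × (Fin n → ℝ)), |r| ≤ |r| * (1 + ‖p‖) ^ 0 := by simp
  have hH : (volume : Measure ((Fin n → ℝ) × (Fin n → ℝ))).IsAddHaarMeasure :=
    Measure.prod.instIsAddHaarMeasure (volume : Measure (Fin n → ℝ)) (volume : Measure (Fin n → ℝ))
  -- integrability and vanishing of the three fluxes
  have iu : ∀ (r : ℝ) (a b : SchwartzMap ((Fin n → ℝ) × (Fin n → ℝ)) ℂ),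
      Integrable (fun p => r * inner ℝ (a p) (b p)) :=
    fun r a b => kfp_int _ (fun _ => r) continuous_const _ _ (cb r) a b
  have iy : ∀ j (a b : SchwartzMap ((Fin n → ℝ) × (Fin n → ℝ)) ℂ),
      Integrable (fun p => p.2 j * inner ℝ (a p) (b p)) :=
    fun j a b => kfp_int _ (fun p => p.2 j) (yc j) _ _ (yb j) a b
  have iW : ∀ j (a b : SchwartzMap ((Fin n → ℝ) × (Fin n → ℝ)) ℂ),
      Integrable (fun p => W j p * inner ℝ (a p) (b p)) :=
    fun j a b => kfp_int _ (W j) (Wc j) _ _ (Wb j) a b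
  have I1 : ∀ j, Integrable (fun p => 1 * inner ℝ (b j p) (b j p) + 1 * inner ℝ (u p) (c j p)
      + (1/2) * inner ℝ (u p) (u p) + p.2 j * inner ℝ (u p) (b j p)) := fun j =>
    (((iu 1 (b j) (b j)).add (iu 1 u (c j))).add (iu (1/2) u u)).add (iy j u (b j))
  have Z1 : ∀ j, ∫ p, (1 * inner ℝ (b j p) (b j p) + 1 * inner ℝ (u p) (c j p)
      + (1/2) * inner ℝ (u p) (u p) + p.2 j * inner ℝ (u p) (b j p)) = 0 := by
    intro j
    refine kfp_zero volume (fun p => 1 * inner ℝ (u p) (b j p)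
      + (1/2) * (p.2 j * inner ℝ (u p) (u p))) _ (e j)
      ((iu 1 u (b j)).add ((iy j u u).const_mul _)) (I1 j) fun p => ?_
    have h := (((lu j p).inner ℝ (lb j p)).const_mul 1).add
      (((ly j p).mul ((lu j p).inner ℝ (lu j p))).const_mul (1/2))
    refine HasDerivAt.congr_deriv h ?_
    simp [real_inner_comm (u p) (b j p)]
    ring
  have Z2 : ∀ j, ∫ p, p.2 j * inner ℝ (u p) (d j p) = 0 := by
    intro j
    refine kfp_zero volume (fun p => (1/2) * (p.2 j * inner ℝ (u p) (u p))) _ (f j)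
      ((iy j u u).const_mul _) (iy j u (d j)) fun p => ?_
    have h := (((lx j p).inner ℝ (lx j p)).const_mul (p.2 j)).const_mul (1/2)
    have h' : ∀ t : ℝ, (p + t • f j).2 j = p.2 j := fun t => by simp [f]
    unfold HasLineDerivAt
    simp only [h']
    refine HasDerivAt.congr_deriv h ?_
    simp [real_inner_comm (u p) (d j p)]
    ring
  have Z3 : ∀ j, ∫ p, W j p * inner ℝ (u p) (b j p) = 0 := by
    intro j
    refine kfp_zero volume (fun p => (1/2) * (W j p * inner ℝ (u p) (u p))) _ (e j)
      ((iW j u u).const_mul _) (iW j u (b j)) fun p => ?_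
    have h := (((lu j p).inner ℝ (lu j p)).const_mul (W j p)).const_mul (1/2)
    have h' : ∀ t : ℝ, W j (p + t • e j) = W j p := fun t => by simp [e, W]
    unfold HasLineDerivAt
    simp only [h']
    refine HasDerivAt.congr_deriv h ?_
    simp [real_inner_comm (u p) (b j p)]
    ring
  have pt := fun p : (Fin n → ℝ) × (Fin n → ℝ) =>
    kfp_pt p.2 (fun j => W j p) (u p) (fun j => b j p) (fun j => c j p) (fun j => d j p) (hu' p)
  have Ij : ∀ j, Integrable (fun p => (1 * inner ℝ (b j p) (b j p) + 1 * inner ℝ (u p) (c j p)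
      + (1/2) * inner ℝ (u p) (u p) + p.2 j * inner ℝ (u p) (b j p))
      - p.2 j * inner ℝ (u p) (d j p) + W j p * inner ℝ (u p) (b j p)) := fun j =>
    ((I1 j).sub (iy j u (d j))).add (iW j u (b j))
  have I2 : ∀ j, Integrable (fun p => (1 * inner ℝ (b j p) (b j p) + 1 * inner ℝ (u p) (c j p)
      + (1/2) * inner ℝ (u p) (u p) + p.2 j * inner ℝ (u p) (b j p))
      - p.2 j * inner ℝ (u p) (d j p)) := fun j => (I1 j).sub (iy j u (d j))
  have IS : Integrable (fun p : (Fin n → ℝ) × (Fin n → ℝ) =>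
      ∑ j, ‖b j p + ((p.2 j / 2 : ℝ) : ℂ) * u p‖ ^ 2) := by
    simp_rw [pt]
    exact integrable_finsetSum _ fun j _ => Ij j
  have ZS : ∫ p : (Fin n → ℝ) × (Fin n → ℝ),
      ∑ j, ‖b j p + ((p.2 j / 2 : ℝ) : ℂ) * u p‖ ^ 2 = 0 := by
    simp_rw [pt]
    rw [integral_finsetSum _ fun j _ => Ij j]
    refine Finset.sum_eq_zero fun j _ => ?_
    rw [integral_add (I2 j) (iW j u (b j)),
      integral_sub (I1 j) (iy j u (d j)), Z1, Z2, Z3]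
    simp
  have S0 : (fun p : (Fin n → ℝ) × (Fin n → ℝ) =>
      ∑ j, ‖b j p + ((p.2 j / 2 : ℝ) : ℂ) * u p‖ ^ 2) = fun _ => 0 := by
    have h := (integral_eq_zero_iff_of_nonneg (fun p => by positivity) IS).1 ZS
    refine (Continuous.ae_eq_iff_eq volume ?_ continuous_const).1 h
    refine continuous_finsetSum _ fun j _ => ?_
    have h1 := (b j).continuous
    have h2 := u.continuous
    have h3 := yc j
    fun_prop
  have D0 : ∀ j p, b j p = -((p.2 j / 2 : ℝ) : ℂ) * u p := by
    intro j p
    have h := congrFun S0 p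
    have h1 := (Finset.sum_eq_zero_iff_of_nonneg (fun j _ => by positivity)).1 h j
      (Finset.mem_univ j)
    have h2 : b j p + ((p.2 j / 2 : ℝ) : ℂ) * u p = 0 := by simpa using h1
    linear_combination h2
  have C0 : ∀ j p, c j p = -(1/2) * u p + ((p.2 j) ^ 2 / 4 : ℂ) * u p := by
    intro j p
    have h1 := lb j p
    have h2 : HasDerivAt (fun t : ℝ => -(((p + t • e j).2 j / 2 : ℝ) : ℂ) * u (p + t • e j)) _ 0 :=
      ((((ly j p).div_const 2).ofReal_comp).neg).mul (lu j p)
    have h3 : (fun t : ℝ => b j (p + t • e j)) =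
      (fun t : ℝ => -(((p + t • e j).2 j / 2 : ℝ) : ℂ) * u (p + t • e j)) :=
      funext fun t => D0 j _
    rw [h3] at h1
    rw [h1.unique h2, D0]
    simp
    ring
  have T0 : ∀ p : (Fin n → ℝ) × (Fin n → ℝ),
      ∑ j, (p.2 j : ℂ) * d j p + (1/2) * (∑ j, (p.2 j : ℂ) * (W j p : ℂ)) * u p = 0 := by
    intro p
    have h := hu' p
    have h1 : ∑ j, c j p = (((∑ j, (p.2 j) ^ 2 : ℝ) : ℂ) / 4 - (n : ℂ) / 2) * u p := by
      simp_rw [C0]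
      rw [Finset.sum_add_distrib, ← Finset.sum_mul, ← Finset.sum_mul, ← Finset.sum_div]
      simp
      ring
    have h2 : ∑ j, ((W j p : ℝ) : ℂ) * b j p
        = - ((1/2) * (∑ j, (p.2 j : ℂ) * (W j p : ℂ)) * u p) := by
      simp_rw [D0, Finset.mul_sum, Finset.sum_mul]
      rw [← Finset.sum_neg_distrib]
      refine Finset.sum_congr rfl fun j _ => ?_
      push_cast
      ring
    rw [h1, h2] at h
    linear_combination h
  have dv : ∀ (p : (Fin n → ℝ) × (Fin n → ℝ)) (v : Fin n → ℝ),
      fderiv ℝ u p (0, v) = ∑ j, (v j : ℂ) * b j p := by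
    intro p v
    have : ((0, v) : (Fin n → ℝ) × (Fin n → ℝ)) = ∑ j, v j • e j := by
      ext i
      · simp [e, Prod.fst_sum]
      · simp [e, Prod.snd_sum, Finset.sum_apply, Pi.single_apply]
    rw [this, map_sum]
    refine Finset.sum_congr rfl fun j _ => ?_
    rw [map_smul, Complex.real_smul]
    rfl
  have dx : ∀ (p : (Fin n → ℝ) × (Fin n → ℝ)) (v : Fin n → ℝ),
      fderiv ℝ u p (v, 0) = ∑ j, (v j : ℂ) * d j p := by
    intro p v
    have : ((v, 0) : (Fin n → ℝ) × (Fin n → ℝ)) = ∑ j, v j • f j := by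
      ext i
      · simp [f, Prod.fst_sum, Finset.sum_apply, Pi.single_apply]
      · simp [f, Prod.snd_sum]
    rw [this, map_sum]
    refine Finset.sum_congr rfl fun j _ => ?_
    rw [map_smul, Complex.real_smul]
    rfl
  have dV : ∀ (x v : Fin n → ℝ), fderiv ℝ V x v = ∑ j, v j * fderiv ℝ V x (Pi.single j 1) := by
    intro x v
    have : v = ∑ j, v j • (Pi.single j 1 : Fin n → ℝ) := by
      ext i
      simp [Finset.sum_apply, Pi.single_apply]
    conv_lhs => rw [this, map_sum]
    simp
  -- Gaussian in `v`
  have F1 : ∀ (x v : Fin n → ℝ),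
      u (x, v) * Complex.exp (((∑ j, v j ^ 2) / 4 : ℝ)) = u (x, 0) := by
    intro x v
    have hl : ∀ t : ℝ, HasDerivAt (fun t : ℝ => ((x, t • v) : (Fin n → ℝ) × (Fin n → ℝ)))
        (0, v) t := fun t => (hasDerivAt_const t x).prodMk (by simpa using (hasDerivAt_id t).smul_const v)
    have h1 : ∀ t : ℝ, HasDerivAt (fun t : ℝ => u (x, t • v)) (fderiv ℝ u (x, t • v) (0, v)) t :=
      fun t => (u.differentiableAt (x := (x, t • v))).hasFDerivAt.comp_hasDerivAt t (hl t)
    have h2 : ∀ t : ℝ, HasDerivAt (fun t : ℝ => Complex.exp ((t ^ 2 * (∑ j, v j ^ 2) / 4 : ℝ))) _ t :=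
      fun t => ((((hasDerivAt_pow 2 t).mul_const (∑ j, v j ^ 2)).div_const 4).ofReal_comp).cexp
    have h := kfp_const (fun t => (h1 t).mul (h2 t)) (fun t => by
      rw [dv]
      simp_rw [D0]
      have : ∑ j, (v j : ℂ) * (-((((x, t • v) : (Fin n → ℝ) × (Fin n → ℝ)).2 j / 2 : ℝ) : ℂ)
          * u (x, t • v)) = - (t / 2 * ∑ j, (v j : ℂ) ^ 2) * u (x, t • v) := by
        rw [Finset.mul_sum, ← Finset.sum_neg_distrib, Finset.sum_mul]
        refine Finset.sum_congr rfl fun j _ => ?_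
        simp
        ring
      rw [this]
      push_cast
      ring) 1 0
    simpa using h
  have F2 : ∀ (v : Fin n → ℝ) (t : ℝ),
      u (t • v, v) * Complex.exp ((V (t • v) / 2 : ℝ)) = u (0, v) * Complex.exp ((V 0 / 2 : ℝ)) := by
    intro v t
    have hl' : ∀ t : ℝ, HasDerivAt (fun t : ℝ => t • v) v t :=
      fun t => by simpa using (hasDerivAt_id t).smul_const v
    have hl : ∀ t : ℝ, HasDerivAt (fun t : ℝ => ((t • v, v) : (Fin n → ℝ) × (Fin n → ℝ)))
        (v, 0) t := fun t => (hl' t).prodMk (hasDerivAt_const t v)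
    have h1 : ∀ t : ℝ, HasDerivAt (fun t : ℝ => u (t • v, v)) (fderiv ℝ u (t • v, v) (v, 0)) t :=
      fun t => (u.differentiableAt (x := (t • v, v))).hasFDerivAt.comp_hasDerivAt t (hl t)
    have hV1 : ∀ t : ℝ, HasDerivAt (fun t : ℝ => V (t • v)) (fderiv ℝ V (t • v) v) t :=
      fun t => ((hV.differentiable (by norm_num)) (t • v)).hasFDerivAt.comp_hasDerivAt t (hl' t)
    have h2 : ∀ t : ℝ, HasDerivAt (fun t : ℝ => Complex.exp ((V (t • v) / 2 : ℝ))) _ t :=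
      fun t => (((hV1 t).div_const 2).ofReal_comp).cexp
    have h := kfp_const (fun t => (h1 t).mul (h2 t)) (fun t => by
      have := T0 (t • v, v)
      rw [dx, dV]
      simp only [W] at this
      push_cast
      linear_combination Complex.exp (((V (t • v) : ℂ) / 2)) * this) t 0
    simpa using h
  -- combine
  have key : ∀ (v : Fin n → ℝ) (t : ℝ),
      u (t • v, v) * Complex.exp ((V (t • v) / 2 : ℝ)) * Complex.exp (((∑ j, v j ^ 2) / 4 : ℝ))
        = u (0, 0) * Complex.exp ((V 0 / 2 : ℝ)) := by
    intro v t
    rw [F2, ← F1 0 v]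
    ring
  have u00 : u (0, 0) = 0 := by
    let v : Fin n → ℝ := fun _ => 1
    obtain ⟨A, -, hA⟩ := u.decay 1 0
    let B : ℝ := ‖u (0, 0)‖ * Real.exp (V 0 / 2)
    let Q : ℝ := Real.exp (C / 2) * Real.exp ((∑ j, v j ^ 2) / 4)
    have hQ : 0 < Q := by positivity
    have h1 : ∀ t : ℝ, 0 < t → t * B ≤ A * Q := by
      intro t ht
      have h2 := congrArg norm (key v t)
      simp only [norm_mul, Complex.norm_exp_ofReal] at h2
      have h3 : ‖((t • v, v) : (Fin n → ℝ) × (Fin n → ℝ))‖ * ‖u (t • v, v)‖ ≤ A := by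
        simpa using hA (t • v, v)
      have h4 : t ≤ ‖((t • v, v) : (Fin n → ℝ) × (Fin n → ℝ))‖ := by
        have h5 : |(t • v) ⟨0, hn⟩| ≤ ‖t • v‖ := norm_le_pi_norm (t • v) ⟨0, hn⟩
        have h6 := norm_fst_le ((t • v, v) : (Fin n → ℝ) × (Fin n → ℝ))
        simp only [v, Pi.smul_apply, smul_eq_mul, mul_one] at h5
        exact (le_abs_self t).trans (h5.trans h6)
      have h7 : Real.exp (V (t • v) / 2) ≤ Real.exp (C / 2) := by
        have := (le_abs_self _).trans (hC (t • v))
        gcongr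
      have h8 : t * ‖u (t • v, v)‖ ≤ A := le_trans (by gcongr) h3
      have hA0 : 0 ≤ A := le_trans (by positivity) h8
      calc t * B = (t * ‖u (t • v, v)‖) *
            (Real.exp (V (t • v) / 2) * Real.exp ((∑ j, v j ^ 2) / 4)) := by
              simp only [B]; rw [← h2]; ring
        _ ≤ A * Q := by simp only [Q]; gcongr
    have hB : B ≤ 0 := by
      by_contra hB
      push Not at hB
      have hA0 : 0 ≤ A * Q := le_trans (by positivity) (h1 1 one_pos)
      have := h1 ((A * Q + 1) / B) (by positivity)
      rw [div_mul_cancel₀ _ hB.ne'] at this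
      linarith
    have hn0 : ‖u (0, 0)‖ ≤ 0 := by
      by_contra h
      push Not at h
      have : 0 < B := by positivity
      linarith
    simpa using hn0
  ext ⟨x, v⟩
  have h0 : ∀ x : Fin n → ℝ, u (x, 0) = 0 := by
    intro x
    have h := key x 1
    rw [u00, zero_mul] at h
    simp only [one_smul, mul_eq_zero, Complex.exp_ne_zero, or_false] at h
    rw [← F1 x x, h, zero_mul]
  have h := F1 x v
  rw [h0, mul_eq_zero] at h
  simpa [Complex.exp_ne_zero] using h
end
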